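/- Let (A, φ) be a scalar probability space. The free cumulants of (A, φ) have the cyclic property: for every n ≥ 1 and all a₁, …, aₙ ∈ A, κₙ(a₁, a₂, …, aₙ) = κₙ(aₙ, a₁, a₂, …, a_{n−1}). -/

import Mathlib

/-!
The rotation `i ↦ i - 1` of `Fin (n + 1)` acts on the set partitions of `Fin (n + 1)`, and it
preserves noncrossingness because crossing is a property of four points on a circle. By traciality
`φ(a₁ ⋯ aₙ) = φ(aₙ a₁ ⋯ aₙ₋₁)`, so the two moment–cumulant expansions agree; matching the term of
a partition in one expansion with the term of its rotation in the other, one compares the blocks.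
A block not containing `0` keeps the order of its elements under the rotation, while the first
element of a block containing `0` becomes the last one, so that its factor is evaluated on a
cyclically shifted tuple (`cumulant_rotate`). By strong induction on the number of arguments
these factors agree for all proper blocks, so all terms except that of the one-block partition
cancel, and the remaining terms are the two cumulants to be compared.
-/

variable {A : Type*}
section StateDef
variable [Ring A] [Algebra ℂ A] [StarRing A] [StarModule ℂ A]

/-- A faithful tracial state on a unital complex `⋆`-algebra. -/
structure IsFaithfulTracialState (φ : A →ₗ[ℂ] ℂ) : Prop where
  unital : φ 1 = 1
  positive : ∀ a : A, 0 ≤ (φ (star a * a)).re ∧ (φ (star a * a)).im = 0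
  tracial : ∀ a b : A, φ (a * b) = φ (b * a)
  faithful : ∀ a : A, φ (star a * a) = 0 → a = 0

end StateDef

noncomputable section

/-- A finite partition of `{0, …, n−1}` is noncrossing if whenever `a < b < c < d` with
`a, c` in one block and `b, d` in another, the two blocks coincide. -/
def IsNoncrossing {n : ℕ} (π : Finpartition (Finset.univ : Finset (Fin n))) : Prop :=
  ∀ a b c d : Fin n, a < b → b < c → c < d →
    ∀ B₁ ∈ π.parts, ∀ B₂ ∈ π.parts,
      a ∈ B₁ → c ∈ B₁ → b ∈ B₂ → d ∈ B₂ → B₁ = B₂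

instance finpartitionFintype {n : ℕ} :
    Fintype (Finpartition (Finset.univ : Finset (Fin n))) :=
  Fintype.ofInjective Finpartition.parts fun _ _ h => Finpartition.ext h

variable {A : Type*} [Ring A] [Algebra ℂ A]

/-- The compound quantity `κ_π(a₁, …, aₙ)`: the product over the blocks of `π` of `κ`
evaluated on the entries of the block, taken in increasing order. -/
def cumPart (κ : ∀ n : ℕ, (Fin n → A) → ℂ) {n : ℕ}
    (π : Finpartition (Finset.univ : Finset (Fin n))) (a : Fin n → A) : ℂ :=
  ∏ B ∈ π.parts, κ B.card (fun i => a ((B.orderIsoOfFin rfl i : Fin n)))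

open scoped Classical in
/-- The family `κ` satisfies the moment–cumulant formula for `φ`:
`φ(a₁ ⋯ aₙ) = Σ_{π ∈ NC(n)} κ_π(a₁, …, aₙ)`. -/
def MomentCumulant (φ : A →ₗ[ℂ] ℂ) (κ : ∀ n : ℕ, (Fin n → A) → ℂ) : Prop :=
  ∀ n : ℕ, 0 < n → ∀ a : Fin n → A,
    φ (List.ofFn a).prod =
      ∑ π : Finpartition (Finset.univ : Finset (Fin n)),
        if IsNoncrossing π then cumPart κ π a else 0

end

/-- The rotation `i ↦ i - 1` of `Fin (n + 1)`. -/
def rotEquiv (n : ℕ) : Fin (n + 1) ≃ Fin (n + 1) := Equiv.subRight 1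

theorem rotEquiv_zero (n : ℕ) : rotEquiv n 0 = Fin.last n := by
  change (0 : Fin (n + 1)) - 1 = Fin.last n
  rw [sub_eq_iff_eq_add, Fin.last_add_one]

theorem rotEquiv_succ (n : ℕ) (i : Fin n) : rotEquiv n i.succ = i.castSucc := by
  simp [rotEquiv, ← Fin.coeSucc_eq_succ]

theorem rotEquiv_lt {n : ℕ} {i j : Fin (n + 1)} (hi : i ≠ 0) (hij : i < j) :
    rotEquiv n i < rotEquiv n j := by
  obtain ⟨i, rfl⟩ := Fin.exists_succ_eq.mpr hi
  obtain ⟨j, rfl⟩ := Fin.exists_succ_eq.mpr (Fin.ne_zero_of_lt hij)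
  simpa [rotEquiv_succ] using hij

theorem rotEquiv_lt_zero {n : ℕ} {i : Fin (n + 1)} (hi : i ≠ 0) :
    rotEquiv n i < rotEquiv n 0 := by
  obtain ⟨i, rfl⟩ := Fin.exists_succ_eq.mpr hi
  simp [rotEquiv_succ, rotEquiv_zero, Fin.castSucc_lt_last]

theorem rotEquiv_lt_iff {n : ℕ} {i j : Fin (n + 1)} (hi : i ≠ 0) (hj : j ≠ 0) :
    rotEquiv n i < rotEquiv n j ↔ i < j := by
  obtain ⟨i, rfl⟩ := Fin.exists_succ_eq.mpr hi
  obtain ⟨j, rfl⟩ := Fin.exists_succ_eq.mpr hj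
  simp [rotEquiv_succ]

theorem ne_zero_of_rotEquiv_lt {n : ℕ} {i j : Fin (n + 1)}
    (h : rotEquiv n i < rotEquiv n j) : i ≠ 0 := by
  rintro rfl
  rw [rotEquiv_zero] at h
  exact absurd h (Fin.le_last _).not_gt

/-- The action of the rotation `i ↦ i - 1` on the subsets of `Fin (n + 1)`. -/
def rotFinset (n : ℕ) : Finset (Fin (n + 1)) ≃o Finset (Fin (n + 1)) where
  toEquiv := (rotEquiv n).finsetCongr
  map_rel_iff' := by simp

theorem rotFinset_apply {n : ℕ} (B : Finset (Fin (n + 1))) :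
    rotFinset n B = B.map (rotEquiv n).toEmbedding := rfl

/-- The image of a partition of `Fin (n + 1)` under the rotation `i ↦ i - 1`. -/
def rotPart {n : ℕ} (π : Finpartition (Finset.univ : Finset (Fin (n + 1)))) :
    Finpartition (Finset.univ : Finset (Fin (n + 1))) :=
  (π.map (rotFinset n)).copy (by simp [rotFinset_apply])

theorem rotPart_parts {n : ℕ} (π : Finpartition (Finset.univ : Finset (Fin (n + 1)))) :
    (rotPart π).parts = π.parts.map (rotFinset n).toEquiv.toEmbedding := rfl

theorem rotPart_bijective (n : ℕ) : Function.Bijective (rotPart (n := n)) := by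
  refine Finite.injective_iff_bijective.mp fun π ρ h => Finpartition.ext ?_
  have h' := congrArg Finpartition.parts h
  rw [rotPart_parts, rotPart_parts] at h'
  exact Finset.map_injective _ h'

theorem isNoncrossing_rotPart {n : ℕ} (π : Finpartition (Finset.univ : Finset (Fin (n + 1)))) :
    IsNoncrossing (rotPart π) ↔ IsNoncrossing π := by
  constructor
  · intro h a b c d hab hbc hcd B₁ hB₁ B₂ hB₂ ha hc hb hd
    have mem : ∀ B ∈ π.parts, rotFinset n B ∈ (rotPart π).parts := fun B hB =>
      Finset.mem_map_of_mem _ hB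
    have memB : ∀ B : Finset (Fin (n + 1)), ∀ i ∈ B, rotEquiv n i ∈ rotFinset n B :=
      fun B i hi => Finset.mem_map_of_mem _ hi
    have hb0 := Fin.ne_zero_of_lt hab
    have hc0 := Fin.ne_zero_of_lt hbc
    have hd0 := Fin.ne_zero_of_lt hcd
    apply (rotFinset n).injective
    by_cases ha0 : a = 0
    · -- `a = 0` is sent to the largest element, so the four points become `b, c, d, a`.
      subst ha0
      exact (h _ _ _ _ (rotEquiv_lt hb0 hbc) (rotEquiv_lt hc0 hcd) (rotEquiv_lt_zero hd0)
        _ (mem _ hB₂) _ (mem _ hB₁) (memB _ _ hb) (memB _ _ hd) (memB _ _ hc) (memB _ _ ha)).symm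
    · exact h _ _ _ _ (rotEquiv_lt ha0 hab) (rotEquiv_lt hb0 hbc) (rotEquiv_lt hc0 hcd)
        _ (mem _ hB₁) _ (mem _ hB₂) (memB _ _ ha) (memB _ _ hc) (memB _ _ hb) (memB _ _ hd)
  · intro h a b c d hab hbc hcd B₁ hB₁ B₂ hB₂ ha hc hb hd
    obtain ⟨C₁, hC₁, rfl⟩ := Finset.mem_map.mp hB₁
    obtain ⟨C₂, hC₂, rfl⟩ := Finset.mem_map.mp hB₂
    obtain ⟨a, ma, rfl⟩ := Finset.mem_map.mp ha
    obtain ⟨b, mb, rfl⟩ := Finset.mem_map.mp hb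
    obtain ⟨c, mc, rfl⟩ := Finset.mem_map.mp hc
    obtain ⟨d, md, rfl⟩ := Finset.mem_map.mp hd
    have ha0 := ne_zero_of_rotEquiv_lt hab
    have hb0 := ne_zero_of_rotEquiv_lt hbc
    have hc0 := ne_zero_of_rotEquiv_lt hcd
    have hab := (rotEquiv_lt_iff ha0 hb0).mp hab
    have hbc := (rotEquiv_lt_iff hb0 hc0).mp hbc
    congr 1
    by_cases hd0 : d = 0
    · -- `0` is sent to the largest of the four points, so their preimages are in the order `d, a, b, c`.
      subst hd0
      exact (h _ _ _ _ (Fin.pos_of_ne_zero ha0) hab hbc _ hC₂ _ hC₁ md mb ma mc).symm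
    · exact h _ _ _ _ hab hbc ((rotEquiv_lt_iff hc0 hd0).mp hcd) _ hC₁ _ hC₂ ma mc mb md

/-- The factor of a block may be computed from any strictly increasing enumeration of it. -/
theorem cumulant_eq_of_strictMono {A : Type*} (κ : ∀ n : ℕ, (Fin n → A) → ℂ) {n m : ℕ}
    (a : Fin n → A) (B : Finset (Fin n)) (hB : B.card = m) (f : Fin m → Fin n)
    (hf : ∀ i, f i ∈ B) (hmono : StrictMono f) :
    κ B.card (fun i => a (B.orderIsoOfFin rfl i)) = κ m (fun i => a (f i)) := by
  subst hB
  rw [Finset.orderEmbOfFin_unique rfl hf hmono]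
  rfl

/-- If `κ` is cyclic on tuples of the size of the block `B`, then rotating the block and rotating
the arguments have the same effect on its factor. -/
theorem cumulant_rotate {A : Type*} (κ : ∀ n : ℕ, (Fin n → A) → ℂ) {n m : ℕ}
    (a : Fin (n + 1) → A) (B : Finset (Fin (n + 1))) (hB : B.card = m + 1)
    (hcyc : ∀ b : Fin (m + 1) → A, κ (m + 1) b = κ (m + 1) (fun i => b (i - 1))) :
    κ (rotFinset n B).card (fun i => a ((rotFinset n B).orderIsoOfFin rfl i)) =
      κ B.card (fun i => a (rotEquiv n (B.orderIsoOfFin rfl i))) := by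
  have hB' : (rotFinset n B).card = m + 1 := by rw [rotFinset_apply, Finset.card_map, hB]
  set e := B.orderEmbOfFin hB with he
  have hmem : ∀ i, rotEquiv n (e i) ∈ rotFinset n B := fun i =>
    Finset.mem_map_of_mem _ (B.orderEmbOfFin_mem hB i)
  rw [cumulant_eq_of_strictMono κ (fun i => a (rotEquiv n i)) B hB e
    (B.orderEmbOfFin_mem hB) e.strictMono]
  by_cases h0 : e 0 = 0
  · have hpos : ∀ i : Fin m, e i.succ ≠ 0 := fun i =>
      Fin.ne_zero_of_lt (e.strictMono (Fin.succ_pos i))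
    -- the increasing enumeration of the rotated block starts at the second element of `B`
    rw [cumulant_eq_of_strictMono κ a _ hB' (fun i => rotEquiv n (e ((rotEquiv m).symm i)))
      (fun i => hmem _), hcyc]
    · congr 1
      funext i
      have : i - 1 = rotEquiv m i := rfl
      rw [this, Equiv.symm_apply_apply]
    · intro i j hij
      obtain ⟨i, rfl⟩ := (rotEquiv m).surjective i
      obtain ⟨j, rfl⟩ := (rotEquiv m).surjective j
      simp only [Equiv.symm_apply_apply]
      have hi := ne_zero_of_rotEquiv_lt hij
      obtain ⟨i', rfl⟩ := Fin.exists_succ_eq.mpr hi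
      by_cases hj : j = 0
      · rw [hj, h0]
        exact rotEquiv_lt_zero (hpos i')
      · exact rotEquiv_lt (hpos i') (e.strictMono ((rotEquiv_lt_iff hi hj).mp hij))
  · rw [cumulant_eq_of_strictMono κ a _ hB' (fun i => rotEquiv n (e i)) hmem]
    intro i j hij
    refine rotEquiv_lt (fun hi => h0 ?_) (e.strictMono hij)
    exact le_antisymm (hi ▸ e.monotone (Fin.zero_le i)) (Fin.zero_le _)

theorem cumPart_rotPart {A : Type*} [Ring A] [Algebra ℂ A] (κ : ∀ n : ℕ, (Fin n → A) → ℂ) {n : ℕ}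
    (a : Fin (n + 1) → A) (π : Finpartition (Finset.univ : Finset (Fin (n + 1))))
    (hcyc : ∀ B ∈ π.parts, ∀ m, B.card = m + 1 → ∀ b : Fin (m + 1) → A,
      κ (m + 1) b = κ (m + 1) (fun i => b (i - 1))) :
    cumPart κ (rotPart π) a = cumPart κ π (fun i => a (i - 1)) := by
  unfold cumPart
  rw [rotPart_parts, Finset.prod_map]
  refine Finset.prod_congr rfl fun B hB => ?_
  obtain ⟨m, hm⟩ := Nat.exists_eq_succ_of_ne_zero
    (Finset.card_pos.mpr (π.nonempty_of_mem_parts hB)).ne'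
  exact cumulant_rotate κ a B hm (hcyc B hB m hm)

/-- The partition of `Fin (n + 1)` with a single block. -/
def onePart (n : ℕ) : Finpartition (Finset.univ : Finset (Fin (n + 1))) :=
  Finpartition.indiscrete Finset.univ_nonempty.ne_empty

theorem onePart_parts (n : ℕ) : (onePart n).parts = {Finset.univ} := rfl

theorem isNoncrossing_onePart (n : ℕ) : IsNoncrossing (onePart n) := by
  intro a b c d _ _ _ B₁ hB₁ B₂ hB₂ _ _ _ _
  rw [onePart_parts, Finset.mem_singleton] at hB₁ hB₂
  rw [hB₁, hB₂]

theorem cumPart_onePart {A : Type*} [Ring A] [Algebra ℂ A] (κ : ∀ n : ℕ, (Fin n → A) → ℂ) {n : ℕ}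
    (a : Fin (n + 1) → A) : cumPart κ (onePart n) a = κ (n + 1) a := by
  unfold cumPart
  rw [onePart_parts, Finset.prod_singleton]
  exact cumulant_eq_of_strictMono κ a _ (by simp) id (by simp) strictMono_id

theorem rotPart_onePart (n : ℕ) : rotPart (onePart n) = onePart n := by
  apply Finpartition.ext
  rw [rotPart_parts, onePart_parts, Finset.map_singleton]
  exact congrArg _ (Finset.map_univ_equiv (rotEquiv n))

theorem card_lt_of_ne_onePart {n : ℕ} {π : Finpartition (Finset.univ : Finset (Fin (n + 1)))}
    (hπ : π ≠ onePart n) {B : Finset (Fin (n + 1))} (hB : B ∈ π.parts) : B.card < n + 1 := by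
  by_contra! h
  have hu : B = Finset.univ := (Finset.card_eq_iff_eq_univ B).mp
    (le_antisymm (Finset.card_le_univ B) (by simpa using h))
  subst hu
  apply hπ
  apply Finpartition.ext
  rw [onePart_parts]
  refine Finset.eq_singleton_iff_unique_mem.mpr ⟨hB, fun C hC => ?_⟩
  obtain ⟨x, hx⟩ := π.nonempty_of_mem_parts hC
  exact π.eq_of_mem_parts hC hB hx (Finset.mem_univ x)

theorem trace_rotate {A : Type*} [Ring A] [Algebra ℂ A] (φ : A →ₗ[ℂ] ℂ)
    (htr : ∀ a b : A, φ (a * b) = φ (b * a)) {n : ℕ} (a : Fin (n + 1) → A) :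
    φ (List.ofFn fun i => a (i - 1)).prod = φ (List.ofFn a).prod := by
  have h0 : a (0 - 1) = a (Fin.last n) := congrArg a (rotEquiv_zero n)
  have hs : (fun i : Fin n => a (i.succ - 1)) = fun i => a i.castSucc :=
    funext fun i => congrArg a (rotEquiv_succ n i)
  rw [List.ofFn_succ, List.prod_cons, h0, hs, htr, List.ofFn_succ' a, List.concat_eq_append,
    List.prod_append, List.prod_singleton]

/-- The free cumulants of a scalar probability space `(A, φ)` (i.e. any
family satisfying the moment–cumulant formula) have the cyclic property
`κₙ(a₁, …, aₙ) = κₙ(aₙ, a₁, …, a_{n−1})`. -/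
theorem free_cumulants_cyclic
    {A : Type*} [Ring A] [Algebra ℂ A] [StarRing A] [StarModule ℂ A]
    (φ : A →ₗ[ℂ] ℂ) (hφ : IsFaithfulTracialState φ)
    (κ : ∀ n : ℕ, (Fin n → A) → ℂ) (hκ : MomentCumulant φ κ) :
    ∀ (n : ℕ) (a : Fin (n + 1) → A),
      κ (n + 1) a = κ (n + 1) (fun i => a (i - 1)) := by
  classical
  intro n
  induction n using Nat.strong_induction_on with
  | _ n ih =>
  intro a
  have h1 := (trace_rotate φ hφ.tracial a).symm
  rw [hκ _ n.succ_pos, hκ _ n.succ_pos, ← (rotPart_bijective n).sum_comp,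
    ← Finset.add_sum_erase _ _ (Finset.mem_univ (onePart n)),
    ← Finset.add_sum_erase _ _ (Finset.mem_univ (onePart n)),
    rotPart_onePart, if_pos (isNoncrossing_onePart n), if_pos (isNoncrossing_onePart n),
    cumPart_onePart, cumPart_onePart] at h1
  have h2 : ∀ π ∈ (Finset.univ.erase (onePart n)),
      (if IsNoncrossing π then cumPart κ π (fun i => a (i - 1)) else 0) =
        if IsNoncrossing (rotPart π) then cumPart κ (rotPart π) a else 0 := by
    intro π hπ
    rw [isNoncrossing_rotPart, cumPart_rotPart κ a π]
    intro B hB m hm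
    have := card_lt_of_ne_onePart (Finset.ne_of_mem_erase hπ) hB
    exact ih m (by omega)
  rw [Finset.sum_congr rfl h2] at h1
  exact add_right_cancel h1
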